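/- arXiv:1110.5277 — 2 statements merged into one kernel-verified Lean document; each statement's English description precedes it below -/
import Mathlib

section
/- Let α ∈ ℝ and 0 < β ≤ 1/4. Suppose F₂(α,β) has Property A. If t ∈ 𝔗₁(F₁(α,β) − F₁(α,β)) and Θ_α(t) ≥ 0 on 𝕋², then t lies in 𝔘₁(F₁(α,β)), i.e. t is a uniform limit of functions |p_j|² with p_j ∈ 𝔗₁(F₁(α,β)). -/
open Complex MeasureTheory Real Filter

noncomputable section

/-- The circle group `𝕋 = ℝ/ℤ`. -/
abbrev 𝕋 := AddCircle (1 : ℝ)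

/-- `θ_α(j)` : the smallest integer minimizing `|θ_α(j) − jα|`
(the nearest integer to `jα`, rounding half down). -/
def thetaA (α : ℝ) (j : ℤ) : ℤ := ⌈(j : ℝ) * α - 1 / 2⌉

/-- The Bohr set `F₁(α,β) = {j ∈ ℤ : |θ_α(j) − jα| < β}`. -/
def F1set (α β : ℝ) : Set ℤ := {j | |(thetaA α j : ℝ) - (j : ℝ) * α| < β}

/-- `F₂(α,β) = {(j,k) ∈ ℤ² : |k − jα| < β}`. -/
def F2set (α β : ℝ) : Set (ℤ × ℤ) := {jk | |(jk.2 : ℝ) - (jk.1 : ℝ) * α| < β}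

/-- `t : 𝕋 → ℂ` is a trigonometric polynomial. -/
def IsTrigPoly1 (t : 𝕋 → ℂ) : Prop :=
  ∃ c : ℤ →₀ ℂ, t = fun x => ∑ j ∈ c.support, c j * fourier j x

/-- The frequency set of `t : 𝕋 → ℂ`. -/
def freq1 (t : 𝕋 → ℂ) : Set ℤ := {j | fourierCoeff t j ≠ 0}

/-- `𝔗₁(F)` : trigonometric polynomials on `𝕋` with frequencies in `F`. -/
def T1 (F : Set ℤ) : Set (𝕋 → ℂ) := {t | IsTrigPoly1 t ∧ freq1 t ⊆ F}

/-- `t : 𝕋² → ℂ` is a trigonometric polynomial. -/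
def IsTrigPoly2 (t : 𝕋 × 𝕋 → ℂ) : Prop :=
  ∃ c : (ℤ × ℤ) →₀ ℂ, t = fun p => ∑ jk ∈ c.support, c jk * fourier jk.1 p.1 * fourier jk.2 p.2

/-- Fourier coefficient on the 2-torus. -/
def coeff2 (t : 𝕋 × 𝕋 → ℂ) (jk : ℤ × ℤ) : ℂ :=
  ∫ x : 𝕋, (∫ y : 𝕋, t (x, y) * fourier (-jk.1) x * fourier (-jk.2) y
    ∂AddCircle.haarAddCircle) ∂AddCircle.haarAddCircle

/-- The frequency set of `t : 𝕋² → ℂ`. -/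
def freq2 (t : 𝕋 × 𝕋 → ℂ) : Set (ℤ × ℤ) := {jk | coeff2 t jk ≠ 0}

/-- `𝔗₂(F)` : trigonometric polynomials on `𝕋²` with frequencies in `F`. -/
def T2 (F : Set (ℤ × ℤ)) : Set (𝕋 × 𝕋 → ℂ) := {t | IsTrigPoly2 t ∧ freq2 t ⊆ F}

/-- The map `Θ_α : 𝔗₁ → 𝔗₂`, `Θ_α(t)(x,y) = Σ_j t̂(j) e_j(x) e_{θ_α(j)}(y)`. -/
def Theta (α : ℝ) (t : 𝕋 → ℂ) : 𝕋 × 𝕋 → ℂ :=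
  fun p => ∑' j : ℤ, fourierCoeff t j * fourier j p.1 * fourier (thetaA α j) p.2

/-- `𝔖₁(F) = {|p|² : p ∈ 𝔗₁(F)}`. -/
def S1 (F : Set ℤ) : Set (𝕋 → ℂ) :=
  {f | ∃ p ∈ T1 F, f = fun x => p x * (starRingEnd ℂ) (p x)}

/-- `𝔖₂(F) = {|q|² : q ∈ 𝔗₂(F)}`. -/
def S2 (F : Set (ℤ × ℤ)) : Set (𝕋 × 𝕋 → ℂ) :=
  {f | ∃ q ∈ T2 F, f = fun p => q p * (starRingEnd ℂ) (q p)}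

/-- `𝔘₁(F)` : trigonometric polynomials that are uniform limits of elements of `𝔖₁(F)`. -/
def U1 (F : Set ℤ) : Set (𝕋 → ℂ) :=
  {t | IsTrigPoly1 t ∧ ∃ s : ℕ → (𝕋 → ℂ), (∀ n, s n ∈ S1 F) ∧ TendstoUniformly s t atTop}

/-- `𝔘₂(F)` : trigonometric polynomials that are uniform limits of elements of `𝔖₂(F)`. -/
def U2 (F : Set (ℤ × ℤ)) : Set (𝕋 × 𝕋 → ℂ) :=
  {t | IsTrigPoly2 t ∧ ∃ s : ℕ → (𝕋 × 𝕋 → ℂ), (∀ n, s n ∈ S2 F) ∧ TendstoUniformly s t atTop}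

/-- The difference set `F − F`. -/
def diffSet {G : Type*} [Sub G] (F : Set G) : Set G := {x | ∃ u ∈ F, ∃ v ∈ F, x = u - v}

/-- `F ⊆ ℤ²` has Property A if `𝔘₂(F) = 𝔗₂⁺(F − F)`. -/
def PropertyA (F : Set (ℤ × ℤ)) : Prop :=
  U2 F = {t | IsTrigPoly2 t ∧ freq2 t ⊆ diffSet F ∧ ∀ p, ∃ r : ℝ, 0 ≤ r ∧ t p = (r : ℂ)}

theorem aux_orth (m k : ℤ) :
    ∫ x : 𝕋, (fourier m x : ℂ) * fourier (-k) x ∂AddCircle.haarAddCircle = if m = k then 1 else 0 := by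
  have h : ∀ x : 𝕋, (fourier m x : ℂ) * fourier (-k) x = fourier (m - k) x := by
    intro x
    rw [sub_eq_add_neg, fourier_add]
  simp_rw [h]
  have h2 := orthonormal_iff_ite.mp (orthonormal_fourier (T := (1 : ℝ))) k m
  rw [ContinuousMap.inner_toLp] at h2
  have h3 : ∀ x : 𝕋, (fourier m x : ℂ) * (starRingEnd ℂ) (fourier k x) = fourier (m - k) x := by
    intro x
    rw [← fourier_neg, h]
  simp_rw [h3] at h2
  rw [h2]
  simp [eq_comm]

theorem aux_int (f : 𝕋 → ℂ) (hf : Continuous f) :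
    Integrable f (AddCircle.haarAddCircle (T := (1 : ℝ))) :=
  hf.integrable_of_hasCompactSupport (HasCompactSupport.of_compactSpace f)

theorem aux_coeff1 {ι : Type*} (s : Finset ι) (c : ι → ℂ) (e : ι → ℤ) (k : ℤ) :
    fourierCoeff (T := (1 : ℝ)) (fun x => ∑ i ∈ s, c i * fourier (e i) x) k =
      ∑ i ∈ s, if e i = k then c i else 0 := by
  unfold fourierCoeff
  simp only [smul_eq_mul, Finset.mul_sum]
  rw [integral_finsetSum]
  · refine Finset.sum_congr rfl fun i _ => ?_
    have : ∀ x : 𝕋, (fourier (-k) x : ℂ) * (c i * fourier (e i) x) =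
        c i * (fourier (e i) x * fourier (-k) x) := fun x => by ring
    simp_rw [this]
    rw [integral_const_mul, aux_orth]
    simp
  · intro i _
    apply aux_int
    fun_prop

theorem aux_coeff2 {ι : Type*} (s : Finset ι) (c : ι → ℂ) (e : ι → ℤ × ℤ) (k : ℤ × ℤ) :
    coeff2 (fun p => ∑ i ∈ s, c i * fourier (e i).1 p.1 * fourier (e i).2 p.2) k =
      ∑ i ∈ s, if e i = k then c i else 0 := by
  unfold coeff2
  have h1 : ∀ x : 𝕋, (∫ y : 𝕋, (∑ i ∈ s, c i * fourier (e i).1 x * fourier (e i).2 y)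
      * fourier (-k.1) x * fourier (-k.2) y ∂AddCircle.haarAddCircle) =
      ∑ i ∈ s, (c i * if (e i).2 = k.2 then 1 else 0) * (fourier (e i).1 x * fourier (-k.1) x) := by
    intro x
    simp only [Finset.sum_mul]
    rw [integral_finsetSum]
    · refine Finset.sum_congr rfl fun i _ => ?_
      have : ∀ y : 𝕋, c i * fourier (e i).1 x * fourier (e i).2 y * fourier (-k.1) x * fourier (-k.2) y
          = (c i * fourier (e i).1 x * fourier (-k.1) x) * (fourier (e i).2 y * fourier (-k.2) y) :=
        fun y => by ring
      simp_rw [this]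
      rw [integral_const_mul, aux_orth]
      ring
    · intro i _
      apply aux_int
      fun_prop
  simp only [h1]
  rw [integral_finsetSum]
  · refine Finset.sum_congr rfl fun i _ => ?_
    rw [integral_const_mul, aux_orth]
    simp only [Prod.ext_iff]
    split_ifs <;> simp_all
  · intro i _
    apply aux_int
    fun_prop

theorem aux_trig1 {ι : Type*} (s : Finset ι) (c : ι → ℂ) (e : ι → ℤ) :
    IsTrigPoly1 (fun x => ∑ i ∈ s, c i * fourier (e i) x) := by
  refine ⟨∑ i ∈ s, Finsupp.single (e i) (c i), ?_⟩
  funext x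
  change _ = Finsupp.sum (∑ i ∈ s, Finsupp.single (e i) (c i)) (fun j a => a * fourier j x)
  rw [← Finsupp.sum_finsetSum_index]
  · refine Finset.sum_congr rfl fun i _ => ?_
    rw [Finsupp.sum_single_index (by simp)]
  · simp
  · intros; ring

theorem aux_trig2 {ι : Type*} (s : Finset ι) (c : ι → ℂ) (e : ι → ℤ × ℤ) :
    IsTrigPoly2 (fun p => ∑ i ∈ s, c i * fourier (e i).1 p.1 * fourier (e i).2 p.2) := by
  refine ⟨∑ i ∈ s, Finsupp.single (e i) (c i), ?_⟩
  funext p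
  change _ = Finsupp.sum (∑ i ∈ s, Finsupp.single (e i) (c i))
    (fun j a => a * fourier j.1 p.1 * fourier j.2 p.2)
  rw [← Finsupp.sum_finsetSum_index]
  · refine Finset.sum_congr rfl fun i _ => ?_
    rw [Finsupp.sum_single_index (by simp)]
  · simp
  · intros; ring

theorem aux_theta (α : ℝ) (j k : ℤ) (h : |(k : ℝ) - j * α| < 1 / 2) : thetaA α j = k := by
  unfold thetaA
  rw [abs_lt] at h
  rw [Int.ceil_eq_iff]
  constructor <;> linarith


/-- For `0 < β ≤ 1/4`, if `F₂(α,β)` has Property A, `t` is a trigonometric polynomial with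
frequencies in `F₁(α,β) − F₁(α,β)`, and `Θ_α(t) ≥ 0` on `𝕋²`, then `t ∈ 𝔘₁(F₁(α,β))`. -/
theorem statement9 (α β : ℝ) (hβ0 : 0 < β) (hβ : β ≤ 1 / 4)
    (hA : PropertyA (F2set α β))
    (t : 𝕋 → ℂ) (ht : IsTrigPoly1 t) (hfreq : freq1 t ⊆ diffSet (F1set α β))
    (hpos : ∀ q : 𝕋 × 𝕋, ∃ r : ℝ, 0 ≤ r ∧ Theta α t q = (r : ℂ)) :
    t ∈ U1 (F1set α β) := by
  obtain ⟨c, rfl⟩ := ht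
  have hc : ∀ k, fourierCoeff (T := (1 : ℝ)) (fun x => ∑ j ∈ c.support, c j * fourier j x) k = c k := by
    intro k
    rw [aux_coeff1 c.support c (fun j => j) k]
    simp +contextual [eq_comm]
  have hTh : Theta α (fun x => ∑ j ∈ c.support, c j * fourier j x) = fun p : 𝕋 × 𝕋 =>
      ∑ j ∈ c.support, c j * fourier j p.1 * fourier (thetaA α j) p.2 := by
    funext p
    unfold Theta
    simp only [hc]
    rw [tsum_eq_sum]
    intro j hj
    simp [Finsupp.notMem_support_iff.mp hj]
  have hcF : ∀ j, c j ≠ 0 → j ∈ diffSet (F1set α β) := by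
    intro j hj
    apply hfreq
    change fourierCoeff _ j ≠ 0
    rwa [hc]
  have hmem : Theta α (fun x => ∑ j ∈ c.support, c j * fourier j x) ∈ U2 (F2set α β) := by
    rw [hA]
    refine ⟨?_, ?_, hpos⟩
    · rw [hTh]
      exact aux_trig2 c.support c (fun j => (j, thetaA α j))
    · rw [hTh]
      rintro k hk
      change coeff2 _ k ≠ 0 at hk
      rw [aux_coeff2 c.support c (fun j => (j, thetaA α j)) k] at hk
      obtain ⟨j, hj, hne⟩ := Finset.exists_ne_zero_of_sum_ne_zero hk
      have hjk : (j, thetaA α j) = k := by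
        by_contra h
        exact hne (if_neg h)
      subst hjk
      obtain ⟨u, hu, v, hv, rfl⟩ := hcF j (Finsupp.mem_support_iff.mp hj)
      refine ⟨(u, thetaA α u), hu, (v, thetaA α v), hv, ?_⟩
      have : thetaA α (u - v) = thetaA α u - thetaA α v := by
        apply aux_theta
        have hu' : |(thetaA α u : ℝ) - (u : ℝ) * α| < β := hu
        have hv' : |(thetaA α v : ℝ) - (v : ℝ) * α| < β := hv
        rw [abs_lt] at *
        push_cast
        constructor <;> linarith [hu'.1, hu'.2, hv'.1, hv'.2]
      simp [this]
  obtain ⟨-, s, hs, hlim⟩ := hmem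
  refine ⟨⟨c, rfl⟩, fun n x => s n (x, 0), ?_, ?_⟩
  · intro n
    obtain ⟨q, ⟨⟨d, rfl⟩, hqf⟩, hsq⟩ := hs n
    refine ⟨fun x => ∑ i ∈ d.support, d i * fourier i.1 x, ⟨aux_trig1 d.support d Prod.fst, ?_⟩, ?_⟩
    · rintro k hk
      change fourierCoeff _ k ≠ 0 at hk
      rw [aux_coeff1 d.support d Prod.fst k] at hk
      obtain ⟨i, hi, hne⟩ := Finset.exists_ne_zero_of_sum_ne_zero hk
      have hik : i.1 = k := by
        by_contra h
        exact hne (if_neg h)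
      subst hik
      have hiF : i ∈ F2set α β := by
        apply hqf
        change coeff2 _ i ≠ 0
        rw [aux_coeff2 d.support d (fun i => i) i]
        simpa using hi
      have hiF' : |(i.2 : ℝ) - (i.1 : ℝ) * α| < β := hiF
      change |(thetaA α i.1 : ℝ) - (i.1 : ℝ) * α| < β
      rw [aux_theta α i.1 i.2 (by linarith)]
      exact hiF'
    · funext x
      change s n (x, 0) = _
      rw [hsq]
      simp
  · have h := hlim.comp (fun x : 𝕋 => ((x, 0) : 𝕋 × 𝕋))
    rw [hTh] at h
    have e : (fun x : 𝕋 => ∑ j ∈ c.support, c j * fourier j x) = (fun p : 𝕋 × 𝕋 =>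
        ∑ j ∈ c.support, c j * fourier j p.1 * fourier (thetaA α j) p.2) ∘ (fun x : 𝕋 => (x, 0)) := by
      funext x
      simp
    rw [e]
    exact h
end
end

section
/- If α ∈ ℝ is irrational and its Liouville–Roth constant satisfies μ₀(α) > 2, then for every β > 0 the set F₂(α,β) = {(j,k) ∈ ℤ² : |k − jα| < β} has Property A; that is, every nonnegative trigonometric polynomial on 𝕋² with frequencies in F₂(α,β) − F₂(α,β) is a uniform limit of functions |q|² with q a trigonometric polynomial with frequencies in F₂(α,β). -/
open Complex MeasureTheory Real Filter

noncomputable section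

abbrev XX := 𝕋 × 𝕋

/-- product Haar measure -/
def nu : Measure XX := (AddCircle.haarAddCircle (T := (1:ℝ))).prod AddCircle.haarAddCircle

instance : IsProbabilityMeasure nu := by unfold nu; infer_instance
instance : nu.IsAddLeftInvariant := by unfold nu; infer_instance
instance : nu.IsAddRightInvariant := by unfold nu; infer_instance
instance : nu.IsOpenPosMeasure := by unfold nu; infer_instance

/-- characters -/
def ee (n : ℤ × ℤ) : C(XX, ℂ) :=
  ⟨fun p => fourier n.1 p.1 * fourier n.2 p.2, by fun_prop⟩

lemma ee_apply (n : ℤ × ℤ) (p : XX) : ee n p = fourier n.1 p.1 * fourier n.2 p.2 := rfl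

lemma ee_add (m n : ℤ × ℤ) : ee (m + n) = ee m * ee n := by
  ext p
  simp only [ee_apply, ContinuousMap.mul_apply, Prod.fst_add, Prod.snd_add, fourier_add]
  ring

lemma ee_zero : ee 0 = 1 := by
  ext p
  simp [ee_apply]

lemma ee_neg (n : ℤ × ℤ) : ee (-n) = star (ee n) := by
  ext p
  simp only [ee_apply, ContinuousMap.star_apply, Prod.fst_neg, Prod.snd_neg, fourier_neg, star_mul',
    RCLike.star_def]

lemma fourier_pt_add (k : ℤ) (x y : 𝕋) : fourier k (x + y) = (fourier k x * fourier k y : ℂ) := by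
  simp only [fourier_apply, smul_add, AddCircle.toCircle_add, Circle.coe_mul]

lemma ee_apply_add (n : ℤ × ℤ) (p q : XX) : ee n (p + q) = ee n p * ee n q := by
  simp only [ee_apply, Prod.fst_add, Prod.snd_add, fourier_pt_add]
  ring

lemma ee_norm_apply (n : ℤ × ℤ) (p : XX) : ‖ee n p‖ = 1 := by
  rw [ee_apply, norm_mul, fourier_apply, fourier_apply, Circle.norm_coe, Circle.norm_coe, one_mul]

lemma ee_norm (n : ℤ × ℤ) : ‖ee n‖ ≤ 1 :=
  (ContinuousMap.norm_le _ zero_le_one).2 fun p => (ee_norm_apply n p).le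

lemma integrable_cm {E : Type*} [NormedAddCommGroup E] {f : XX → E} (hf : Continuous f) :
    Integrable f nu := hf.integrable_of_hasCompactSupport (HasCompactSupport.of_compactSpace f)

/-- Fourier coefficient as a continuous linear functional -/
def co (n : ℤ × ℤ) : C(XX, ℂ) →L[ℂ] ℂ :=
  LinearMap.mkContinuous
    { toFun := fun f => ∫ p, f p * ee (-n) p ∂nu
      map_add' := fun f g => by
        simp only [ContinuousMap.add_apply, add_mul]
        exact integral_add (integrable_cm (by fun_prop)) (integrable_cm (by fun_prop))
      map_smul' := fun c f => by
        simp only [ContinuousMap.smul_apply, smul_eq_mul, mul_assoc, RingHom.id_apply]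
        exact integral_const_mul _ _ } 1 (fun f => by
        refine (norm_integral_le_of_norm_le_const (C := ‖f‖) (Eventually.of_forall fun p => ?_)).trans ?_
        · rw [norm_mul, ee_norm_apply, mul_one]; exact f.norm_coe_le_norm p
        · simp)

lemma co_apply (n : ℤ × ℤ) (f : C(XX, ℂ)) : co n f = ∫ p, f p * ee (-n) p ∂nu := rfl

lemma co_norm (n : ℤ × ℤ) (f : C(XX, ℂ)) : ‖co n f‖ ≤ ‖f‖ := by
  refine ((co n).le_opNorm f).trans ?_
  have : ‖co n‖ ≤ 1 := LinearMap.mkContinuous_norm_le _ zero_le_one _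
  nlinarith [norm_nonneg f]

lemma co_star (n : ℤ × ℤ) (f : C(XX, ℂ)) : co n (star f) = star (co (-n) f) := by
  rw [co_apply, co_apply, RCLike.star_def, ← integral_conj]
  congr 1; ext p
  rw [ee_neg (- n)]
  simp

lemma integral_ee (n : ℤ × ℤ) : ∫ p, ee n p ∂nu = if n = 0 then 1 else 0 := by
  have h1 (k : ℤ) : ∫ x : 𝕋, fourier k x ∂AddCircle.haarAddCircle = (if k = 0 then 1 else 0 : ℂ) := by
    have h := congrFun (fourierCoeff_fourier (T := 1) k) 0
    simp only [fourierCoeff, neg_zero, fourier_zero, one_smul] at h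
    rw [h, Pi.single_apply]
    simp [eq_comm]
  simp only [ee_apply, nu]
  rw [integral_prod_mul (fun x : 𝕋 => (fourier n.1 x : ℂ)) (fun x : 𝕋 => (fourier n.2 x : ℂ)), h1, h1]
  simp only [Prod.ext_iff, Prod.fst_zero, Prod.snd_zero]
  split_ifs <;> simp_all

lemma co_ee (n m : ℤ × ℤ) : co n (ee m) = if m = n then 1 else 0 := by
  rw [co_apply]
  have : ∀ p, ee m p * ee (-n) p = ee (m - n) p := fun p => by
    rw [sub_eq_add_neg, ee_add]; rfl
  simp only [this, integral_ee, sub_eq_zero]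

lemma coeff2_eq (f : C(XX, ℂ)) (n : ℤ × ℤ) : coeff2 f n = co n f := by
  rw [co_apply, nu, integral_prod _ (by
    have := integrable_cm (f := fun p => f p * ee (-n) p) (by fun_prop)
    exact this)]
  simp only [coeff2, ee_apply, mul_assoc, Prod.fst_neg, Prod.snd_neg]

/-- polynomials with frequencies in S -/
def PS (S : Set (ℤ × ℤ)) : Submodule ℂ C(XX, ℂ) := Submodule.span ℂ (ee '' S)

lemma ee_mem {S : Set (ℤ × ℤ)} {n} (h : n ∈ S) : ee n ∈ PS S := Submodule.subset_span ⟨n, h, rfl⟩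

lemma PS_mono {S T : Set (ℤ × ℤ)} (h : S ⊆ T) : PS S ≤ PS T := Submodule.span_mono (Set.image_mono h)

lemma co_PS {S : Set (ℤ × ℤ)} {f} (hf : f ∈ PS S) {n} (hn : n ∉ S) : co n f = 0 := by
  have : PS S ≤ LinearMap.ker (co n : C(XX, ℂ) →ₗ[ℂ] ℂ) := by
    refine Submodule.span_le.2 ?_
    rintro _ ⟨m, hm, rfl⟩
    have : m ≠ n := fun h => hn (h ▸ hm)
    simp [co_ee, this]
  exact this hf

lemma co_closure {S : Set (ℤ × ℤ)} {f} (hf : f ∈ (PS S).topologicalClosure) {n} (hn : n ∉ S) :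
    co n f = 0 := by
  have : (PS S).topologicalClosure ≤ LinearMap.ker (co n : C(XX, ℂ) →ₗ[ℂ] ℂ) :=
    Submodule.topologicalClosure_minimal _ (fun f hf => co_PS hf hn) (co n).isClosed_ker
  exact this hf

lemma PS_mul {S T U : Set (ℤ × ℤ)} (h : ∀ s ∈ S, ∀ t ∈ T, s + t ∈ U) {f g} (hf : f ∈ PS S)
    (hg : g ∈ PS T) : f * g ∈ PS U := by
  have := Submodule.mul_mem_mul hf hg
  rw [PS, PS, Submodule.span_mul_span] at this
  refine Submodule.span_mono ?_ this
  rintro _ ⟨_, ⟨s, hs, rfl⟩, _, ⟨t, ht, rfl⟩, rfl⟩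
  exact ⟨s + t, h s hs t ht, ee_add s t⟩

lemma PS_star {S T : Set (ℤ × ℤ)} (h : ∀ s ∈ S, -s ∈ T) {f} (hf : f ∈ PS S) : star f ∈ PS T := by
  induction hf using Submodule.span_induction with
  | mem x hx => obtain ⟨n, hn, rfl⟩ := hx; rw [← ee_neg]; exact ee_mem (h n hn)
  | zero => simp
  | add x y _ _ hx hy => rw [star_add]; exact add_mem hx hy
  | smul a x _ hx => rw [star_smul]; exact Submodule.smul_mem _ _ hx

lemma PS_expand (B : Finset (ℤ × ℤ)) {f} (hf : f ∈ PS (B : Set (ℤ × ℤ))) :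
    f = ∑ n ∈ B, co n f • ee n := by
  induction hf using Submodule.span_induction with
  | mem x hx =>
    obtain ⟨n, hn, rfl⟩ := hx
    rw [Finset.sum_eq_single n]
    · rw [co_ee, if_pos rfl]; exact (one_smul ℂ (ee n)).symm
    · intro m _ hm
      rw [co_ee, if_neg (Ne.symm hm)]; exact zero_smul ℂ (ee m)
    · intro h; exact absurd hn h
  | zero =>
    refine (Finset.sum_eq_zero fun m _ => ?_).symm
    rw [map_zero]; exact zero_smul ℂ (ee m)
  | add x y _ _ hx hy =>
    refine (congrArg₂ (· + ·) hx hy).trans ?_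
    rw [← Finset.sum_add_distrib]
    refine Finset.sum_congr rfl fun n _ => ?_
    rw [map_add]; exact (add_smul (co n x) (co n y) (ee n)).symm
  | smul a x _ hx =>
    refine (congrArg (a • ·) hx).trans ?_
    rw [Finset.smul_sum]
    refine Finset.sum_congr rfl fun n _ => ?_
    rw [map_smul]; exact (smul_assoc a (co n x) (ee n)).symm

lemma PS_finite {S : Set (ℤ × ℤ)} {f} (hf : f ∈ PS S) :
    ∃ B : Finset (ℤ × ℤ), f ∈ PS (B : Set (ℤ × ℤ)) := by
  classical
  induction hf using Submodule.span_induction with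
  | mem x hx => obtain ⟨n, hn, rfl⟩ := hx; exact ⟨{n}, ee_mem (by simp)⟩
  | zero => exact ⟨∅, zero_mem _⟩
  | add x y _ _ hx hy =>
    obtain ⟨B, hB⟩ := hx
    obtain ⟨C, hC⟩ := hy
    exact ⟨B ∪ C, add_mem (PS_mono (by simp) hB) (PS_mono (by simp) hC)⟩
  | smul a x _ hx => obtain ⟨B, hB⟩ := hx; exact ⟨B, Submodule.smul_mem _ _ hB⟩

lemma PS_of_co {S : Set (ℤ × ℤ)} {f} (hf : f ∈ PS Set.univ) (h : ∀ n, co n f ≠ 0 → n ∈ S) :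
    f ∈ PS S := by
  obtain ⟨B, hB⟩ := PS_finite hf
  rw [PS_expand B hB]
  refine Submodule.sum_mem _ fun n _ => ?_
  by_cases hn : co n f = 0
  · rw [hn, show (0:ℂ) • ee n = 0 from zero_smul ℂ (ee n)]; exact zero_mem _
  · exact Submodule.smul_mem _ _ (ee_mem (h n hn))

lemma trig_iff (t : 𝕋 × 𝕋 → ℂ) : IsTrigPoly2 t ↔ ∃ f ∈ PS Set.univ, t = ⇑f := by
  constructor
  · rintro ⟨c, rfl⟩
    refine ⟨∑ n ∈ c.support, c n • ee n, Submodule.sum_mem _ fun n _ =>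
      Submodule.smul_mem _ _ (ee_mem trivial), ?_⟩
    ext p
    simp [ContinuousMap.sum_apply, ee_apply, mul_assoc]
  · rintro ⟨f, hf, rfl⟩
    obtain ⟨B, hB⟩ := PS_finite hf
    classical
    refine ⟨Finsupp.onFinset (B.filter fun n => co n f ≠ 0) (fun n => if n ∈ B then co n f else 0)
      (by intro n; simp), ?_⟩
    ext p
    conv_lhs => rw [PS_expand B hB]
    rw [Finsupp.support_onFinset]
    simp only [ContinuousMap.sum_apply, ContinuousMap.smul_apply, ee_apply, smul_eq_mul,
      Finsupp.onFinset_apply]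
    symm
    refine (Finset.sum_subset (s₂ := B) (by intro n; simp; intro h _; exact h) ?_).trans ?_
    · intro n hn h
      simp [hn] at h
      simp [h]
    · exact Finset.sum_congr rfl fun n hn => by simp [hn, mul_assoc]

lemma T2_iff (F : Set (ℤ × ℤ)) (t : 𝕋 × 𝕋 → ℂ) : t ∈ T2 F ↔ ∃ f ∈ PS F, t = ⇑f := by
  constructor
  · rintro ⟨h1, h2⟩
    obtain ⟨f, hf, rfl⟩ := (trig_iff t).1 h1
    exact ⟨f, PS_of_co hf fun n hn => h2 (by rw [freq2, Set.mem_ofPred_eq, coeff2_eq]; exact hn), rfl⟩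
  · rintro ⟨f, hf, rfl⟩
    refine ⟨(trig_iff _).2 ⟨f, PS_mono (Set.subset_univ _) hf, rfl⟩, fun n hn => ?_⟩
    by_contra hc
    rw [freq2, Set.mem_ofPred_eq, coeff2_eq] at hn
    exact hn (co_PS hf hc)

/-- translate of h -/
def tau (h : C(XX, ℂ)) : C(XX, C(XX, ℂ)) :=
  ContinuousMap.curry ⟨fun z : XX × XX => h (z.2 + z.1), by fun_prop⟩

lemma tau_apply (h : C(XX, ℂ)) (q p : XX) : tau h q p = h (p + q) := rfl

lemma tau_int_ee (h : C(XX, ℂ)) (m : ℤ × ℤ) :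
    ∫ q, ee m q • tau h q ∂nu = co (-m) h • ee (-m) := by
  ext p
  have hc : Continuous fun q => ee m q • tau h q := (ee m).continuous.smul (tau h).continuous
  have h1 := ContinuousLinearMap.integral_comp_comm (ContinuousMap.evalCLM ℂ p)
    (integrable_cm hc)
  change ∫ q, ee m q * h (p + q) ∂nu = (∫ q, ee m q • tau h q ∂nu) p at h1
  rw [← h1]
  have h2 : ∀ q, ee m q * h (p + q) = (fun r => ee m r * ee (-m) p * h r) (p + q) := fun q => by
    simp only [ee_apply_add]
    have : ee m p * ee (-m) p = 1 := by
      rw [← ContinuousMap.mul_apply, ← ee_add, add_neg_cancel, ee_zero]; rfl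
    linear_combination (- ee m q * h (p + q)) * this
  simp only [h2]
  rw [integral_add_left_eq_self (fun r => ee m r * ee (-m) p * h r) p]
  change _ = co (-m) h * ee (-m) p
  rw [co_apply, ← integral_mul_const]
  congr 1; ext q; rw [neg_neg]; ring

lemma tau_int_mem {S : Set (ℤ × ℤ)} {h : C(XX, ℂ)} (hh : ∀ n, n ∉ S → co n h = 0) {K : C(XX, ℂ)}
    (hK : K ∈ PS Set.univ) : ∫ q, K q • tau h q ∂nu ∈ PS S := by
  have hc : ∀ K : C(XX, ℂ), Continuous fun q => K q • tau h q :=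
    fun K => K.continuous.smul (tau h).continuous
  induction hK using Submodule.span_induction with
  | mem x hx =>
    obtain ⟨n, -, rfl⟩ := hx
    rw [tau_int_ee]
    by_cases hn : -n ∈ S
    · exact Submodule.smul_mem _ _ (ee_mem hn)
    · rw [hh _ hn, show (0:ℂ) • ee (-n) = 0 from zero_smul ℂ (ee (-n))]; exact zero_mem _
  | zero =>
    have : ∀ q, (0 : C(XX, ℂ)) q • tau h q = 0 := fun q => zero_smul ℂ (tau h q)
    simp only [this, integral_zero]; exact zero_mem _
  | add x y _ _ hx hy =>
    have : ∀ q, (x + y) q • tau h q = x q • tau h q + y q • tau h q := fun q =>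
      add_smul (x q) (y q) (tau h q)
    simp only [this]
    rw [integral_add (integrable_cm (hc x)) (integrable_cm (hc y))]
    exact add_mem hx hy
  | smul a x _ hx =>
    have : ∀ q, (a • x) q • tau h q = a • (x q • tau h q) := fun q =>
      mul_smul a (x q) (tau h q)
    simp only [this]
    have h2 : ∫ q, a • (x q • tau h q) ∂nu = a • ∫ q, x q • tau h q ∂nu := integral_smul a _
    rw [h2]
    exact Submodule.smul_mem _ _ hx

lemma one_mem_PS {S : Set (ℤ × ℤ)} (h : 0 ∈ S) : (1 : C(XX, ℂ)) ∈ PS S := by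
  rw [← ee_zero]; exact ee_mem h

lemma pow_mem_PS {S : Set (ℤ × ℤ)} (h0 : 0 ∈ S) (h : ∀ s ∈ S, ∀ t ∈ S, s + t ∈ S) {f}
    (hf : f ∈ PS S) (n : ℕ) : f ^ n ∈ PS S := by
  induction n with
  | zero => rw [pow_zero]; exact one_mem_PS h0
  | succ n ih => rw [pow_succ]; exact PS_mul h ih hf

lemma fourier_re_lt (x : 𝕋) (hx : x ≠ 0) : (fourier 1 x : ℂ).re < 1 := by
  have h1 : ‖(fourier 1 x : ℂ)‖ = 1 := by rw [fourier_apply, Circle.norm_coe]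
  refine lt_of_le_of_ne ((Complex.re_le_norm (fourier 1 x : ℂ)).trans h1.le) fun h => hx ?_
  have h2 : (fourier 1 x : ℂ) = 1 := by
    have h3 := Complex.sq_norm (fourier 1 x : ℂ)
    rw [h1, Complex.normSq_apply, h] at h3
    have : (fourier 1 x : ℂ).im = 0 := by
      have : (fourier 1 x : ℂ).im * (fourier 1 x : ℂ).im = 0 := by linarith
      simpa using this
    exact Complex.ext h this
  rw [fourier_one] at h2
  have h4 : AddCircle.toCircle x = 1 := Subtype.ext h2
  exact AddCircle.injective_toCircle one_ne_zero (h4.trans (AddCircle.toCircle_zero).symm)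

lemma fourier_re_bd (x : 𝕋) : -1 ≤ (fourier 1 x : ℂ).re ∧ (fourier 1 x : ℂ).re ≤ 1 := by
  have h1 : ‖(fourier 1 x : ℂ)‖ = 1 := by rw [fourier_apply, Circle.norm_coe]
  have := Complex.abs_re_le_norm (fourier 1 x : ℂ)
  rw [h1] at this
  exact abs_le.1 this

lemma fejer {S : Set (ℤ × ℤ)} {h : C(XX, ℂ)} (hh : ∀ n, n ∉ S → co n h = 0) :
    h ∈ (PS S).topologicalClosure := by
  let c : XX → ℝ := fun p => 2 + (fourier 1 p.1 : ℂ).re + (fourier 1 p.2 : ℂ).re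
  have hc : Continuous c := by
    have h1 : Continuous fun p : XX => (fourier 1 p.1 : ℂ) := by fun_prop
    have h2 : Continuous fun p : XX => (fourier 1 p.2 : ℂ) := by fun_prop
    exact (continuous_const.add (Complex.continuous_re.comp h1)).add (Complex.continuous_re.comp h2)
  have hc0 : c 0 = 4 := by
    simp only [c, Prod.fst_zero, Prod.snd_zero, fourier_eval_zero]; norm_num
  have key := tendsto_setIntegral_pow_smul_of_unique_maximum_of_isCompact_of_continuousOn
    (μ := nu) (s := Set.univ) (x₀ := (0 : XX)) (c := c) (g := fun q => tau h q) isCompact_univ hc.continuousOn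
    (by
      intro y _ hy
      rw [hc0]
      have hb1 := fourier_re_bd y.1
      have hb2 := fourier_re_bd y.2
      by_cases h1 : y.1 = 0
      · have h2 : y.2 ≠ 0 := fun h2 => hy (Prod.ext h1 h2)
        have := fourier_re_lt _ h2
        simp only [c]; linarith
      · have := fourier_re_lt _ h1
        simp only [c]; linarith)
    (by
      intro y _
      have hb1 := fourier_re_bd y.1
      have hb2 := fourier_re_bd y.2
      simp only [c]; linarith)
    (by rw [hc0]; norm_num) (by simp) (tau h).continuous.continuousOn
  have h0 : tau h 0 = h := by ext p; rw [tau_apply, add_zero]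
  simp only [h0, setIntegral_univ] at key
  refine mem_closure_of_tendsto key (Eventually.of_forall fun n => ?_)
  let cc : C(XX, ℂ) := (2 : ℂ) • ee 0 + (1 / 2 : ℂ) • (ee (1, 0) + ee (-(1, 0)) + (ee (0, 1) + ee (-(0, 1))))
  have hcc : cc ∈ PS Set.univ := by
    refine add_mem (Submodule.smul_mem _ _ (ee_mem trivial)) (Submodule.smul_mem _ _ ?_)
    exact add_mem (add_mem (ee_mem trivial) (ee_mem trivial)) (add_mem (ee_mem trivial) (ee_mem trivial))
  have hccc : ∀ q, cc q = (c q : ℂ) := fun q => by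
    change (2 : ℂ) * ee 0 q + (1 / 2 : ℂ) * (ee (1, 0) q + ee (-(1, 0)) q + (ee (0, 1) q + ee (-(0, 1)) q)) = _
    rw [ee_neg, ee_neg, ee_zero, ContinuousMap.star_apply, ContinuousMap.star_apply, RCLike.star_def,
      Complex.add_conj, Complex.add_conj]
    simp only [c, ee_apply, fourier_zero, mul_one, one_mul, ContinuousMap.one_apply]
    push_cast; ring
  have h3 := tau_int_mem hh (pow_mem_PS (Set.mem_univ _) (fun _ _ _ _ => trivial) hcc n)
  have h4 : ∀ q, (cc ^ n) q • tau h q = c q ^ n • tau h q := fun q => by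
    rw [ContinuousMap.pow_apply, hccc]
    ext p
    change (c q : ℂ) ^ n * _ = ((c q ^ n : ℝ) : ℂ) * _
    push_cast; rfl
  simp only [h4] at h3
  have h5 := Submodule.smul_mem (PS S) (((∫ x, c x ^ n ∂nu)⁻¹ : ℝ) : ℂ) h3
  exact h5

/-- linear form -/
def phi (α : ℝ) (n : ℤ × ℤ) : ℝ := (n.2 : ℝ) - (n.1 : ℝ) * α

lemma phi_add (α : ℝ) (m n : ℤ × ℤ) : phi α (m + n) = phi α m + phi α n := by
  simp only [phi, Prod.fst_add, Prod.snd_add]; push_cast; ring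

lemma phi_neg (α : ℝ) (n : ℤ × ℤ) : phi α (-n) = - phi α n := by
  simp only [phi, Prod.fst_neg, Prod.snd_neg]; push_cast; ring

lemma phi_zero (α : ℝ) : phi α 0 = 0 := by simp [phi]

/-- box -/
def bx (D : ℕ) : Finset (ℤ × ℤ) := Finset.Icc (-(D : ℤ)) D ×ˢ Finset.Icc (-(D : ℤ)) D

lemma mem_bx {D : ℕ} {n : ℤ × ℤ} : n ∈ bx D ↔ (-(D : ℤ) ≤ n.1 ∧ n.1 ≤ D) ∧ (-(D : ℤ) ≤ n.2 ∧ n.2 ≤ D) := by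
  simp [bx]

lemma card_bx (D : ℕ) : (bx D).card = (2 * D + 1) ^ 2 := by
  rw [bx, Finset.card_product, Int.card_Icc]
  have : ((D : ℤ) + 1 - -D).toNat = 2 * D + 1 := by omega
  rw [this]; ring

lemma exists_bx {f} (hf : f ∈ PS Set.univ) : ∃ D : ℕ, f ∈ PS (bx D : Set (ℤ × ℤ)) := by
  obtain ⟨B, hB⟩ := PS_finite hf
  refine ⟨∑ n ∈ B, (n.1.natAbs + n.2.natAbs), PS_mono (fun n hn => ?_) hB⟩
  have := Finset.single_le_sum (f := fun n : ℤ × ℤ => n.1.natAbs + n.2.natAbs)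
    (fun i _ => Nat.zero_le _) hn
  rw [Finset.mem_coe, mem_bx]
  omega

lemma pow_bx {D : ℕ} {f} (hf : f ∈ PS (bx D : Set (ℤ × ℤ))) (k : ℕ) :
    f ^ k ∈ PS (bx (k * D) : Set (ℤ × ℤ)) := by
  induction k with
  | zero => rw [pow_zero]; exact one_mem_PS (by simp [mem_bx])
  | succ k ih =>
    rw [pow_succ]
    refine PS_mul (fun s hs t ht => ?_) ih hf
    rw [Finset.mem_coe, mem_bx] at *
    have : (((k + 1) * D : ℕ) : ℤ) = ((k * D : ℕ) : ℤ) + D := by push_cast; ring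
    simp only [Prod.fst_add, Prod.snd_add]
    omega

/-- half-space weight -/
def wt (α : ℝ) (n : ℤ × ℤ) : ℝ := if 0 < phi α n then 1 else if phi α n < 0 then 0 else 1 / 2

lemma wt_add (α : ℝ) (n : ℤ × ℤ) : wt α n + wt α (-n) = 1 := by
  rw [wt, wt, phi_neg]
  rcases lt_trichotomy (phi α n) 0 with h | h | h
  · simp [h, not_lt.2 h.le]
  · simp [h]; norm_num
  · simp [h, not_lt.2 h.le]

lemma wt_norm (α : ℝ) (n : ℤ × ℤ) : ‖(wt α n : ℂ)‖ ≤ 1 := by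
  rw [wt, Complex.norm_real]
  split_ifs <;> norm_num

/-- half-space projection -/
def pr (α : ℝ) (D : ℕ) (f : C(XX, ℂ)) : C(XX, ℂ) := ∑ n ∈ bx D, ((wt α n : ℂ) * co n f) • ee n

lemma pr_norm (α : ℝ) (D : ℕ) (f : C(XX, ℂ)) : ‖pr α D f‖ ≤ (2 * D + 1) ^ 2 * ‖f‖ := by
  refine (norm_sum_le _ _).trans ((Finset.sum_le_card_nsmul _ _ ‖f‖ fun n _ => ?_).trans ?_)
  · refine (norm_smul_le ((wt α n : ℂ) * co n f) (ee n)).trans ?_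
    rw [norm_mul]
    have h1 := wt_norm α n
    have h2 := co_norm n f
    have h3 := ee_norm n
    calc ‖(wt α n : ℂ)‖ * ‖co n f‖ * ‖ee n‖ ≤ 1 * ‖f‖ * 1 := by gcongr
      _ = ‖f‖ := by ring
  · rw [card_bx, nsmul_eq_mul]; push_cast; exact le_rfl

lemma pr_mem (α : ℝ) (D : ℕ) (f : C(XX, ℂ)) : pr α D f ∈ PS {n | 0 ≤ phi α n} := by
  refine Submodule.sum_mem _ fun n _ => ?_
  by_cases hn : phi α n < 0
  · have : wt α n = 0 := by rw [wt, if_neg (not_lt.2 hn.le), if_pos hn]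
    rw [this, Complex.ofReal_zero, zero_mul, show (0:ℂ) • ee n = 0 from zero_smul ℂ (ee n)]
    exact zero_mem _
  · exact Submodule.smul_mem _ _ (ee_mem (not_lt.1 hn))

lemma pr_star (α : ℝ) (D : ℕ) {f : C(XX, ℂ)} (hf : f ∈ PS (bx D : Set (ℤ × ℤ))) (hs : star f = f) :
    pr α D f + star (pr α D f) = f := by
  have h1 : star (pr α D f) = ∑ n ∈ bx D, ((wt α (-n) : ℂ) * co n f) • ee n := by
    rw [pr, star_sum]
    refine Finset.sum_bij' (fun n _ => -n) (fun n _ => -n) ?_ ?_ ?_ ?_ ?_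
    · intro n hn; rw [mem_bx] at *; simp only [Prod.fst_neg, Prod.snd_neg]; omega
    · intro n hn; rw [mem_bx] at *; simp only [Prod.fst_neg, Prod.snd_neg]; omega
    · simp
    · simp
    · intro n _
      rw [neg_neg, ee_neg]
      have h2 : co (-n) f = star (co n f) := by
        conv_lhs => rw [← hs]
        rw [co_star, neg_neg]
      rw [h2]
      ext p
      change star (((wt α n : ℂ) * co n f) * ee n p) = ((wt α n : ℂ) * star (co n f)) * star (ee n p)
      simp
  rw [h1, pr, ← Finset.sum_add_distrib]
  conv_rhs => rw [PS_expand _ hf]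
  refine Finset.sum_congr rfl fun n _ => ?_
  refine (add_smul ((wt α n : ℂ) * co n f) ((wt α (-n) : ℂ) * co n f) (ee n)).symm.trans ?_
  congr 1
  rw [← add_mul, ← Complex.ofReal_add, wt_add, Complex.ofReal_one, one_mul]

lemma exp_closure {S : Set (ℤ × ℤ)} (h0 : 0 ∈ S) (h : ∀ s ∈ S, ∀ t ∈ S, s + t ∈ S) {f}
    (hf : f ∈ (PS S).topologicalClosure) : NormedSpace.exp f ∈ (PS S).topologicalClosure := by
  let A : Subalgebra ℂ C(XX, ℂ) :=
    ((PS S).toSubalgebra (one_mem_PS h0) (fun _ _ hx hy => PS_mul h hx hy)).topologicalClosure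
  have hA : f ∈ A := hf
  exact NormedSpace.exp_mem (R := ℂ) (s := A) (Subalgebra.isClosed_topologicalClosure _) hA

lemma mul_closure {S T U : Set (ℤ × ℤ)} (h : ∀ s ∈ S, ∀ t ∈ T, s + t ∈ U) {f g} (hf : f ∈ PS S)
    (hg : g ∈ (PS T).topologicalClosure) : f * g ∈ (PS U).topologicalClosure :=
  map_mem_closure (f := fun g => f * g) (by fun_prop) hg fun _ hx => PS_mul h hf hx

lemma exp_cm_apply (g : C(XX, ℂ)) (p : XX) : NormedSpace.exp g p = Complex.exp (g p) := by
  have h1 := (NormedSpace.exp_series_hasSum_exp' (𝕂 := ℂ) g).mapL (ContinuousMap.evalCLM ℂ p)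
  have h2 := NormedSpace.exp_series_hasSum_exp' (𝕂 := ℂ) (g p)
  rw [← Complex.exp_eq_exp_ℂ] at h2
  exact h1.unique h2

lemma HasSum.congr_fun_aux {f g : ℕ → ℂ} {a : ℂ} (hf : HasSum f a) (h : ∀ k, g k = f k) :
    HasSum g a := by
  rwa [funext h]

/-- spectral factorization of `1 - s` -/
lemma factor (α L : ℝ) {s : C(XX, ℂ)} {r : ℝ} (hr0 : 0 ≤ r) (hr : r < 1)
    (hs : ∀ p, ∃ x : ℝ, 0 ≤ x ∧ x ≤ r ∧ s p = x) (hsP : s ∈ PS Set.univ)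
    (hu : 1 - s ∈ PS {n | phi α n ≤ L}) :
    ∃ h ∈ (PS {n | 0 ≤ phi α n ∧ phi α n ≤ L}).topologicalClosure, h * star h = 1 - s := by
  obtain ⟨D, hD⟩ := exists_bx hsP
  have hstar : star s = s := by
    ext p
    obtain ⟨x, _, _, hx⟩ := hs p
    rw [ContinuousMap.star_apply, hx]; simp
  have hnorm : ‖s‖ ≤ r := (ContinuousMap.norm_le _ hr0).2 fun p => by
    obtain ⟨x, h0, h1, hx⟩ := hs p
    rw [hx, Complex.norm_real, Real.norm_of_nonneg h0]; exact h1
  let a : ℕ → C(XX, ℂ) := fun k => (((k : ℂ) + 1)⁻¹) • pr α ((k + 1) * D) (s ^ (k + 1))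
  have ha_norm : ∀ k, ‖a k‖ ≤ (2 * (((k + 1 : ℕ) : ℝ) * D) + 1) ^ 2 * r ^ (k + 1) := fun k => by
    refine (norm_smul_le (((k : ℂ) + 1)⁻¹) (pr α ((k + 1) * D) (s ^ (k + 1)))).trans ?_
    have h1 : ‖((k : ℂ) + 1)⁻¹‖ ≤ 1 := by
      rw [norm_inv]
      apply inv_le_one_of_one_le₀
      have : ((k : ℂ) + 1) = ((k + 1 : ℕ) : ℂ) := by push_cast; rfl
      rw [this, Complex.norm_natCast]; push_cast; linarith [(Nat.cast_nonneg k : (0 : ℝ) ≤ k)]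
    have h2 := pr_norm α ((k + 1) * D) (s ^ (k + 1))
    have h3 : ‖s ^ (k + 1)‖ ≤ r ^ (k + 1) := (norm_pow_le s (k + 1)).trans (by gcongr)
    calc _ ≤ 1 * ((2 * (((k + 1) * D : ℕ) : ℝ) + 1) ^ 2 * r ^ (k + 1)) := by
            gcongr
            exact h2.trans (by gcongr)
      _ = _ := by push_cast; ring
  have hsum0 : Summable fun k : ℕ => (2 * ((k : ℝ) * D) + 1) ^ 2 * r ^ k := by
    have hrn : ‖r‖ < 1 := by rwa [Real.norm_of_nonneg hr0]
    have h2 := summable_pow_mul_geometric_of_norm_lt_one 2 hrn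
    have h1 := summable_pow_mul_geometric_of_norm_lt_one 1 hrn
    have h0 := summable_pow_mul_geometric_of_norm_lt_one 0 hrn
    refine (((h2.mul_left (4 * (D : ℝ) ^ 2)).add (h1.mul_left (4 * (D : ℝ)))).add h0).congr fun k => ?_
    ring
  have hsum : Summable a := Summable.of_norm_bounded ((summable_nat_add_iff 1).2 hsum0) ha_norm
  let G := ∑' k, a k
  have hG : HasSum a G := hsum.hasSum
  have hGmem : G ∈ (PS {n | 0 ≤ phi α n}).topologicalClosure := by
    refine (Submodule.isClosed_topologicalClosure _).mem_of_tendsto hG (Eventually.of_forall fun F => ?_)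
    refine Submodule.sum_mem _ fun k _ => ?_
    exact Submodule.le_topologicalClosure _ (Submodule.smul_mem _ _ (pr_mem _ _ _))
  have hGstar : star G ∈ (PS {n | phi α n ≤ 0}).topologicalClosure :=
    map_mem_closure (f := star) continuous_star hGmem fun x hx => PS_star (fun n hn => by
      change phi α (-n) ≤ 0
      rw [phi_neg]; exact neg_nonpos.2 hn) hx
  have hre : ∀ p, G p + star (G p) = ((-Real.log (1 - (s p).re) : ℝ) : ℂ) := fun p => by
    have h1 := (hG.add hG.star).mapL (ContinuousMap.evalCLM ℂ p)
    obtain ⟨x, h0, hx1, hx⟩ := hs p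
    have h2 := Real.hasSum_pow_div_log_of_abs_lt_one (x := x) (by rw [abs_of_nonneg h0]; linarith)
    have h3 := h2.mapL Complex.ofRealCLM
    rw [hx, Complex.ofReal_re]
    refine h1.unique ?_
    refine HasSum.congr_fun_aux h3 fun k => ?_
    have h4 := pr_star α ((k + 1) * D) (pow_bx hD (k + 1)) (by rw [star_pow, hstar])
    have h5 : a k + star (a k) = (((k : ℂ) + 1)⁻¹) • s ^ (k + 1) := by
      conv_rhs => rw [← h4]
      ext q
      change (((k : ℂ) + 1)⁻¹) * pr α ((k + 1) * D) (s ^ (k + 1)) q +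
        star ((((k : ℂ) + 1)⁻¹) * pr α ((k + 1) * D) (s ^ (k + 1)) q) =
        (((k : ℂ) + 1)⁻¹) * (pr α ((k + 1) * D) (s ^ (k + 1)) q +
          star (pr α ((k + 1) * D) (s ^ (k + 1)) q))
      simp [mul_add]
    change (a k + star (a k)) p = ((x ^ (k + 1) / (k + 1) : ℝ) : ℂ)
    rw [h5]
    change (((k : ℂ) + 1)⁻¹) * (s p) ^ (k + 1) = _
    rw [hx]; push_cast; rw [div_eq_inv_mul]
  have hfac : NormedSpace.exp (-G) * star (NormedSpace.exp (-G)) = 1 - s := by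
    ext p
    obtain ⟨x, h0, hx1, hx⟩ := hs p
    change NormedSpace.exp (-G) p * star (NormedSpace.exp (-G) p) = 1 - s p
    rw [exp_cm_apply, RCLike.star_def, ← Complex.exp_conj, ← Complex.exp_add]
    have h1 := hre p
    have h2 : (-G) p + (starRingEnd ℂ) ((-G) p) = ((Real.log (1 - (s p).re) : ℝ) : ℂ) := by
      change -(G p) + (starRingEnd ℂ) (-(G p)) = _
      rw [map_neg, ← RCLike.star_def, ← neg_add, h1]; push_cast; ring
    rw [h2, ← Complex.ofReal_exp, Real.exp_log, hx] 
    · simp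
    · rw [hx, Complex.ofReal_re]; linarith
  refine ⟨NormedSpace.exp (-G), fejer fun n hn => ?_, hfac⟩
  have hE1 : NormedSpace.exp (-G) ∈ (PS {n | 0 ≤ phi α n}).topologicalClosure :=
    exp_closure (by simp [phi_zero]) (fun m hm n hn => by
      change 0 ≤ phi α (m + n); rw [phi_add]; exact add_nonneg hm hn) (neg_mem hGmem)
  have hE2 : NormedSpace.exp (star G) ∈ (PS {n | phi α n ≤ 0}).topologicalClosure :=
    exp_closure (by simp [phi_zero]) (fun m hm n hn => by
      change phi α (m + n) ≤ 0; rw [phi_add]; exact add_nonpos hm hn) hGstar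
  have hE3 : NormedSpace.exp (-G) = (1 - s) * NormedSpace.exp (star G) := by
    rw [← hfac]
    ext p
    change NormedSpace.exp (-G) p =
      NormedSpace.exp (-G) p * star (NormedSpace.exp (-G) p) * NormedSpace.exp (star G) p
    rw [exp_cm_apply, exp_cm_apply, RCLike.star_def, ← Complex.exp_conj, mul_assoc, ← Complex.exp_add]
    have : (starRingEnd ℂ) ((-G) p) + (star G) p = 0 := by
      change (starRingEnd ℂ) (-(G p)) + (starRingEnd ℂ) (G p) = 0
      rw [map_neg]; ring
    rw [this, Complex.exp_zero, mul_one]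
  by_cases h1 : 0 ≤ phi α n
  · have h2 : ¬ phi α n ≤ L := fun h2 => hn ⟨h1, h2⟩
    rw [hE3]
    refine co_closure (S := {n | phi α n ≤ L}) (mul_closure (fun m hm n hn => ?_) hu hE2) h2
    change phi α (m + n) ≤ L
    rw [phi_add]
    have hm' : phi α m ≤ L := hm
    have hn' : phi α n ≤ 0 := hn
    linarith
  · exact co_closure hE1 h1

lemma exists_shift {α : ℝ} (hirr : Irrational α) {a b : ℝ} (hab : a < b) :
    ∃ n : ℤ × ℤ, a < phi α n ∧ phi α n < b := by
  have hd : Dense (AddSubgroup.closure {α, 1} : Set ℝ) :=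
    dense_addSubgroupClosure_pair_iff.2 (by simpa using hirr)
  obtain ⟨x, hx, hxab⟩ := hd.exists_between hab
  obtain ⟨m, n, rfl⟩ := AddSubgroup.mem_closure_pair.1 hx
  refine ⟨(-m, n), ?_⟩
  have : phi α (-m, n) = m • α + n • (1 : ℝ) := by
    simp only [phi, zsmul_eq_mul]; push_cast; ring
  rw [this]; exact hxab

/-- squares -/
def Sq (F : Set (ℤ × ℤ)) : Set C(XX, ℂ) := {f | ∃ q ∈ PS F, f = q * star q}

lemma pos_case {α : ℝ} (hirr : Irrational α) {β L ε : ℝ} (hL : L < 2 * β) (hL0 : 0 ≤ L)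
    (hε : 0 < ε) {t : C(XX, ℂ)} (ht : t ∈ PS {n | |phi α n| ≤ L})
    (hpos : ∀ p, ∃ x : ℝ, ε ≤ x ∧ t p = x) : t ∈ closure (Sq (F2set α β)) := by
  set M := ‖t‖ with hM
  have hle : ∀ p (x : ℝ), ε ≤ x → t p = x → x ≤ M := fun p x hx hp => by
    have := t.norm_coe_le_norm p
    rwa [hp, Complex.norm_real, Real.norm_of_nonneg (hε.le.trans hx)] at this
  have hεM : ε ≤ M := by
    obtain ⟨x, hx, hp⟩ := hpos 0
    exact hx.trans (hle 0 x hx hp)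
  have hMpos : 0 < M := hε.trans_le hεM
  have hu : ((M⁻¹ : ℝ) : ℂ) • t ∈ PS {n | |phi α n| ≤ L} := Submodule.smul_mem _ _ ht
  have huapp : ∀ p, (((M⁻¹ : ℝ) : ℂ) • t) p = ((M⁻¹ : ℝ) : ℂ) * t p := fun p => rfl
  have hsub : (1 : C(XX, ℂ)) - (1 - ((M⁻¹ : ℝ) : ℂ) • t) = ((M⁻¹ : ℝ) : ℂ) • t := sub_sub_cancel _ _
  have hSS : {n : ℤ × ℤ | |phi α n| ≤ L} ⊆ {n | phi α n ≤ L} := by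
    intro n hn
    have hn' : |phi α n| ≤ L := hn
    exact (abs_le.1 hn').2
  obtain ⟨h, hh, hfac⟩ := factor α L (s := 1 - ((M⁻¹ : ℝ) : ℂ) • t) (r := 1 - ε / M)
    (by rw [sub_nonneg, div_le_one hMpos]; exact hεM)
    (by have := div_pos hε hMpos; linarith)
    (fun p => by
      obtain ⟨x, hx, hp⟩ := hpos p
      refine ⟨1 - x / M, ?_, ?_, ?_⟩
      · rw [sub_nonneg, div_le_one hMpos]; exact hle p x hx hp
      · gcongr
      · change 1 - (((M⁻¹ : ℝ) : ℂ) • t) p = _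
        rw [huapp, hp]; push_cast; rw [div_eq_inv_mul])
    (sub_mem (one_mem_PS trivial) (PS_mono (Set.subset_univ _) hu))
    (by rw [hsub]; exact PS_mono hSS hu)
  rw [hsub] at hfac
  obtain ⟨n0, h1, h2⟩ := exists_shift hirr (show -β < β - L by linarith)
  have hq : ee n0 * h ∈ (PS (F2set α β)).topologicalClosure :=
    mul_closure (S := {n0}) (fun m hm n hn => by
      rw [Set.mem_singleton_iff] at hm
      subst hm
      change |phi α (m + n)| < β
      have hn1 : 0 ≤ phi α n := hn.1
      have hn2 : phi α n ≤ L := hn.2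
      rw [phi_add, abs_lt]
      constructor <;> linarith) (ee_mem rfl) hh
  have hfin : ((√M : ℝ) : ℂ) • (ee n0 * h) * star (((√M : ℝ) : ℂ) • (ee n0 * h)) = t := by
    ext p
    have h3 := congrArg (fun f : C(XX, ℂ) => f p) hfac
    change h p * star (h p) = ((M⁻¹ : ℝ) : ℂ) * t p at h3
    change ((√M : ℝ) : ℂ) * (ee n0 p * h p) * star (((√M : ℝ) : ℂ) * (ee n0 p * h p)) = t p
    have h4 : ee n0 p * star (ee n0 p) = 1 := by
      rw [RCLike.star_def, Complex.mul_conj, Complex.normSq_eq_norm_sq, ee_norm_apply]; simp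
    have h5 : ((√M : ℝ) : ℂ) * ((√M : ℝ) : ℂ) = (M : ℂ) := by
      rw [← Complex.ofReal_mul, Real.mul_self_sqrt hMpos.le]
    have h6 : (M : ℂ) * ((M⁻¹ : ℝ) : ℂ) = 1 := by
      rw [← Complex.ofReal_mul, mul_inv_cancel₀ hMpos.ne', Complex.ofReal_one]
    have h7 : star ((√M : ℝ) : ℂ) = ((√M : ℝ) : ℂ) := by simp
    rw [star_mul', star_mul', h7]
    calc _ = (((√M : ℝ) : ℂ) * ((√M : ℝ) : ℂ)) * (ee n0 p * star (ee n0 p)) * (h p * star (h p)) := by ring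
      _ = (M : ℂ) * ((M⁻¹ : ℝ) : ℂ) * t p := by rw [h5, h4, h3]; ring
      _ = t p := by rw [h6, one_mul]
  rw [← hfin]
  refine map_mem_closure (f := fun q : C(XX, ℂ) => q * star q) (by fun_prop)
    (Submodule.smul_mem _ _ hq : ((√M : ℝ) : ℂ) • (ee n0 * h) ∈ (PS (F2set α β)).topologicalClosure)
    fun q hq => ⟨q, hq, rfl⟩

lemma strip_mono {α L K : ℝ} (h : L ≤ K) :
    {n : ℤ × ℤ | |phi α n| ≤ L} ⊆ {n | |phi α n| ≤ K} := by
  intro n hn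
  have hn' : |phi α n| ≤ L := hn
  exact hn'.trans h

lemma exists_L {α β : ℝ} (hβ : 0 < β) {f} (hf : f ∈ PS {n | |phi α n| < 2 * β}) :
    ∃ L, 0 ≤ L ∧ L < 2 * β ∧ f ∈ PS {n | |phi α n| ≤ L} := by
  induction hf using Submodule.span_induction with
  | mem x hx =>
    obtain ⟨n, hn, rfl⟩ := hx
    exact ⟨|phi α n|, abs_nonneg _, hn, ee_mem (le_refl |phi α n|)⟩
  | zero => exact ⟨0, le_rfl, by linarith, zero_mem _⟩
  | add x y _ _ hx hy =>
    obtain ⟨L, h0, h1, h2⟩ := hx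
    obtain ⟨K, k0, k1, k2⟩ := hy
    exact ⟨max L K, h0.trans (le_max_left _ _), max_lt h1 k1,
      add_mem (PS_mono (strip_mono (le_max_left _ _)) h2)
        (PS_mono (strip_mono (le_max_right _ _)) k2)⟩
  | smul a x _ hx =>
    obtain ⟨L, h0, h1, h2⟩ := hx
    exact ⟨L, h0, h1, Submodule.smul_mem _ _ h2⟩

lemma nonneg_case {α : ℝ} (hirr : Irrational α) {β : ℝ} (hβ : 0 < β) {f : C(XX, ℂ)}
    (hf : f ∈ PS (diffSet (F2set α β)))
    (hpos : ∀ p, ∃ x : ℝ, 0 ≤ x ∧ f p = x) : f ∈ closure (Sq (F2set α β)) := by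
  have hsub : diffSet (F2set α β) ⊆ {n | |phi α n| < 2 * β} := by
    rintro _ ⟨u, hu, v, hv, rfl⟩
    have hu' : |phi α u| < β := hu
    have hv' : |phi α v| < β := hv
    change |phi α (u - v)| < 2 * β
    rw [sub_eq_add_neg, phi_add, phi_neg]
    rw [abs_lt] at *
    constructor <;> linarith [hu'.1, hu'.2, hv'.1, hv'.2]
  obtain ⟨L, hL0, hL, hfL⟩ := exists_L hβ (PS_mono hsub hf)
  have hlim : Tendsto (fun k : ℕ => f + ((1 / ((k : ℝ) + 1) : ℝ) : ℂ) • (1 : C(XX, ℂ))) atTop (nhds f) := by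
    have h1 : Tendsto (fun k : ℕ => ((1 / ((k : ℝ) + 1) : ℝ) : ℂ)) atTop (nhds ((0 : ℝ) : ℂ)) :=
      (Complex.continuous_ofReal.tendsto 0).comp tendsto_one_div_add_atTop_nhds_zero_nat
    have h2 := (h1.smul_const (1 : C(XX, ℂ))).const_add f
    have h3 : f + ((0 : ℝ) : ℂ) • (1 : C(XX, ℂ)) = f := by
      ext p
      change f p + ((0 : ℝ) : ℂ) * 1 = f p
      simp
    rwa [h3] at h2
  refine isClosed_closure.mem_of_tendsto hlim (Eventually.of_forall fun k => ?_)
  have hk : (0 : ℝ) < 1 / ((k : ℝ) + 1) := by positivity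
  refine pos_case hirr hL hL0 hk (add_mem hfL (Submodule.smul_mem _ _ (one_mem_PS ?_))) fun p => ?_
  · simp [phi_zero, hL0]
  · obtain ⟨x, hx, hp⟩ := hpos p
    refine ⟨x + 1 / ((k : ℝ) + 1), by linarith, ?_⟩
    change f p + ((1 / ((k : ℝ) + 1) : ℝ) : ℂ) * 1 = _
    rw [hp, mul_one, Complex.ofReal_add]

lemma S2_iff (F : Set (ℤ × ℤ)) (t : 𝕋 × 𝕋 → ℂ) : t ∈ S2 F ↔ ∃ f ∈ Sq F, t = ⇑f := by
  constructor
  · rintro ⟨q, hq, rfl⟩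
    obtain ⟨g, hg, rfl⟩ := (T2_iff F q).1 hq
    exact ⟨g * star g, ⟨g, hg, rfl⟩, rfl⟩
  · rintro ⟨_, ⟨g, hg, rfl⟩, rfl⟩
    exact ⟨⇑g, (T2_iff F _).2 ⟨g, hg, rfl⟩, rfl⟩

lemma Sq_sub {F : Set (ℤ × ℤ)} {f} (hf : f ∈ Sq F) : f ∈ PS (diffSet F) := by
  obtain ⟨q, hq, rfl⟩ := hf
  have hd : ∀ s ∈ F, ∀ t ∈ {n : ℤ × ℤ | -n ∈ F}, s + t ∈ diffSet F := fun s hs t ht =>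
    ⟨s, hs, -t, ht, by rw [sub_neg_eq_add]⟩
  refine PS_mul (T := {n | -n ∈ F}) hd hq
    (PS_star (fun n hn => ?_) hq)
  change - -n ∈ F
  rwa [neg_neg]

/-- If `α` is irrational with Liouville–Roth constant `μ₀(α) > 2` — that is, there is
`μ > 2` such that infinitely many pairs of coprime integers `(c,d)`, `d ≠ 0`, satisfy
`|α − c/d| < 1/|d|^μ` — then for every `β > 0` the set `F₂(α,β)` has Property A. -/
theorem statement17 (α : ℝ) (hirr : Irrational α)
    (hmu : ∃ μ : ℝ, 2 < μ ∧
      {cd : ℤ × ℤ | IsCoprime cd.1 cd.2 ∧ cd.2 ≠ 0 ∧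
        |α - (cd.1 : ℝ) / (cd.2 : ℝ)| < 1 / |(cd.2 : ℝ)| ^ μ}.Infinite)
    (β : ℝ) (hβ : 0 < β) :
    PropertyA (F2set α β) := by
  ext t
  constructor
  · rintro ⟨hT, s, hs, hlim⟩
    refine ⟨hT, ?_⟩
    obtain ⟨f, hf, rfl⟩ := (trig_iff t).1 hT
    choose g hg hsg using fun n => (S2_iff _ _).1 (hs n)
    have hl : Tendsto g atTop (nhds f) := by
      rw [ContinuousMap.tendsto_iff_tendstoUniformly]
      have : s = fun n => ⇑(g n) := funext hsg
      rwa [this] at hlim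
    constructor
    · intro n hn
      by_contra hc
      rw [freq2, Set.mem_ofPred_eq, coeff2_eq] at hn
      refine hn (co_closure (S := diffSet (F2set α β)) ?_ hc)
      exact mem_closure_of_tendsto hl (Eventually.of_forall fun k => Sq_sub (hg k))
    · intro p
      have hcl : IsClosed (Complex.ofReal '' Set.Ici (0 : ℝ)) :=
        Complex.isometry_ofReal.isClosedEmbedding.isClosedMap _ isClosed_Ici
      have hp : Tendsto (fun n => g n p) atTop (nhds (f p)) :=
        ((ContinuousMap.evalCLM ℂ p).continuous.tendsto f).comp hl
      have := hcl.mem_of_tendsto hp (Eventually.of_forall fun k => by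
        obtain ⟨q, -, hq⟩ := hg k
        refine ⟨Complex.normSq (q p), Complex.normSq_nonneg _, ?_⟩
        rw [hq]
        exact (Complex.mul_conj (q p)).symm)
      obtain ⟨r, hr, h⟩ := this
      exact ⟨r, hr, h.symm⟩
  · rintro ⟨hT, hfreq, hpos⟩
    refine ⟨hT, ?_⟩
    obtain ⟨f, hf, rfl⟩ := (T2_iff _ _).1 (show t ∈ T2 (diffSet (F2set α β)) from ⟨hT, hfreq⟩)
    obtain ⟨g, hg, hl⟩ := mem_closure_iff_seq_limit.1 (nonneg_case hirr hβ hf hpos)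
    exact ⟨fun n => ⇑(g n), fun n => (S2_iff _ _).2 ⟨g n, hg n, rfl⟩,
      ContinuousMap.tendsto_iff_tendstoUniformly.1 hl⟩
end
end
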